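/- Let (l,m,k) be an admissible triple with r = (l+m−k)/2. Then, as N → ∞, 1 − θ_{q(N)}(k,l,m)/([k+1]_{q(N)}·N^r) = O(N^{−2}); consequently √(1 − θ_{q(N)}(k,l,m)/([k+1]_{q(N)}·N^r)) = O(N^{−1}). -/

import Mathlib

open scoped BigOperators
open Asymptotics Filter

/-- `q(N) = 2/(N + √(N²−4))`, so that `0 < q ≤ 1` and `q + q⁻¹ = N` for `N ≥ 2`. -/
noncomputable def qpar (N : ℕ) : ℝ := 2 / (N + Real.sqrt ((N : ℝ) ^ 2 - 4))

/-- The quantum integer `[n]_q = q^{n−1} + q^{n−3} + ⋯ + q^{−(n−1)}` (and `[0]_q = 0`). -/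
noncomputable def qint (N n : ℕ) : ℝ :=
  ∑ j ∈ Finset.range n, qpar N ^ ((n : ℤ) - 1 - 2 * (j : ℤ))

/-- The quantum factorial `[n]_q! = [n]_q·[n−1]_q·⋯·[1]_q`, with `[0]_q! = 1`. -/
noncomputable def qfact (N n : ℕ) : ℝ := ∏ i ∈ Finset.range n, qint N (i + 1)

/-- The theta-net `θ_q(k,l,m)` of an admissible triple, with `r = (l+m−k)/2`. -/
noncomputable def thetaNet (N k l m r : ℕ) : ℝ :=
  (qfact N r * qfact N (l - r) * qfact N (m - r) * qfact N (k + r + 1)) /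
    (qfact N l * qfact N m * qfact N k)

/-!
As `N → ∞`, both `[n + 1]_q = q⁻ⁿ (1 + q² + ⋯ + q²ⁿ)` and `Nⁿ = (q⁻¹ + q)ⁿ = q⁻ⁿ (1 + q²)ⁿ` equal
`q⁻ⁿ` up to a factor `1 + O(q²)`. Such factors survive products and quotients, so the theta-net and
`[k + 1]_q Nʳ` are monomials in `q⁻¹` up to `1 + O(q²)`; for an admissible triple the two exponents
agree, and `q = O(N⁻¹)`.
-/

section RelativeError

variable {α 𝕜 : Type*} [NormedField 𝕜] {l : Filter α} {ε f g f' g' : α → 𝕜}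

/-- `f = (1 + O(ε)) g` along `l`: a refinement of asymptotic equivalence `f ~[l] g` that records the
size of the relative error. It is stated without division, so that zeros of `g` are allowed: there
`f` has to vanish too, eventually along `l`. -/
def IsRelApprox (l : Filter α) (ε f g : α → 𝕜) : Prop :=
  (fun x => f x - g x) =O[l] fun x => ε x * g x

namespace IsRelApprox

lemma refl : IsRelApprox l ε g g :=
  (isBigO_zero _ _).congr_left fun _ => (sub_self _).symm

lemma isEquivalent (h : IsRelApprox l ε f g) (hε : Tendsto ε l (nhds 0)) : f ~[l] g :=
  h.trans_isLittleO <| by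
    simpa using ((isLittleO_one_iff 𝕜).2 hε).mul_isBigO (isBigO_refl g l)

lemma isBigO (h : IsRelApprox l ε f g) (hε : ε =O[l] fun _ => (1 : 𝕜)) : f =O[l] g := by
  have hsub : (fun x => f x - g x) =O[l] g :=
    h.trans <| by simpa using hε.mul (isBigO_refl g l)
  simpa using hsub.add (isBigO_refl g l)

lemma mul (hf : IsRelApprox l ε f g) (hf' : IsRelApprox l ε f' g')
    (hε : ε =O[l] fun _ => (1 : 𝕜)) :
    IsRelApprox l ε (fun x => f x * f' x) (fun x => g x * g' x) := by
  have hleft : (fun x => (f x - g x) * f' x) =O[l] fun x => ε x * (g x * g' x) := by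
    simpa only [mul_assoc] using IsBigO.mul hf (hf'.isBigO hε)
  have hright : (fun x => g x * (f' x - g' x)) =O[l] fun x => ε x * (g x * g' x) := by
    simpa only [mul_left_comm] using (isBigO_refl g l).mul hf'
  exact (hleft.add hright).congr_left fun x => by ring

lemma finsetProd {ι : Type*} {s : Finset ι} {F G : ι → α → 𝕜}
    (h : ∀ i ∈ s, IsRelApprox l ε (F i) (G i)) (hε : ε =O[l] fun _ => (1 : 𝕜)) :
    IsRelApprox l ε (fun x => ∏ i ∈ s, F i x) (fun x => ∏ i ∈ s, G i x) := by
  induction s using Finset.cons_induction with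
  | empty => simpa using refl
  | cons i s hi ih =>
    simp only [Finset.prod_cons]
    exact (h i (Finset.mem_cons_self i s)).mul
      (ih fun j hj => h j (Finset.mem_cons_of_mem hj)) hε

lemma pow (h : IsRelApprox l ε f g) (hε : ε =O[l] fun _ => (1 : 𝕜)) (n : ℕ) :
    IsRelApprox l ε (fun x => f x ^ n) (fun x => g x ^ n) := by
  simpa using finsetProd (s := Finset.range n) (fun _ _ => h) hε

lemma one_sub_div (hf : IsRelApprox l ε f g) (hf' : IsRelApprox l ε f' g)
    (hε : Tendsto ε l (nhds 0)) (hg : ∀ᶠ x in l, g x ≠ 0) :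
    (fun x => 1 - f x / f' x) =O[l] ε := by
  have hθ : f' =Θ[l] g := (hf'.isEquivalent hε).isTheta
  have hdiff : (fun x => (f' x - f x) * (f' x)⁻¹) =O[l] fun x => ε x * g x * (g x)⁻¹ := by
    refine IsBigO.mul ?_ hθ.inv.isBigO
    simpa using IsBigO.sub hf' hf
  refine hdiff.congr' ?_ ?_
  · filter_upwards [hg, hθ.eq_zero_iff] with x hgx hx
    have hf'x : f' x ≠ 0 := mt hx.1 hgx
    rw [sub_mul, mul_inv_cancel₀ hf'x, div_eq_mul_inv]
  · filter_upwards [hg] with x hgx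
    exact mul_inv_cancel_right₀ hgx _

end IsRelApprox

lemma isRelApprox_geom_sum (hε : ε =O[l] fun _ => (1 : 𝕜)) (n : ℕ) :
    IsRelApprox l ε (fun x => ∑ i ∈ Finset.range (n + 1), ε x ^ i) (fun _ => 1) := by
  have hsum : (fun x => ∑ i ∈ Finset.range n, ε x ^ i) =O[l] fun _ => (1 : 𝕜) :=
    IsBigO.fun_sum fun i _ => by simpa using hε.pow i
  simpa [IsRelApprox, geom_sum_succ] using (isBigO_refl ε l).mul hsum

end RelativeError

section QuantumParameter

lemma qpar_pos {N : ℕ} (hN : 0 < N) : 0 < qpar N := by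
  unfold qpar
  positivity

lemma qpar_le {N : ℕ} (hN : 0 < N) : qpar N ≤ 2 * (N : ℝ)⁻¹ := by
  rw [qpar, ← div_eq_mul_inv]
  gcongr
  exact le_add_of_nonneg_right (Real.sqrt_nonneg _)

lemma inv_qpar_add_qpar {N : ℕ} (hN : 2 ≤ N) : (qpar N)⁻¹ + qpar N = N := by
  have hN' : (2 : ℝ) ≤ N := by exact_mod_cast hN
  have hsq : Real.sqrt ((N : ℝ) ^ 2 - 4) ^ 2 = (N : ℝ) ^ 2 - 4 := Real.sq_sqrt (by nlinarith)
  have hden : (N : ℝ) + Real.sqrt ((N : ℝ) ^ 2 - 4) ≠ 0 := by positivity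
  rw [qpar]
  field_simp
  linear_combination hsq

lemma eventually_qpar_ne_zero : ∀ᶠ N in atTop, qpar N ≠ 0 :=
  (eventually_gt_atTop 0).mono fun _ hN => (qpar_pos hN).ne'

lemma qpar_isBigO : qpar =O[atTop] fun N : ℕ => (N : ℝ)⁻¹ := by
  refine IsBigO.of_bound 2 ((eventually_gt_atTop 0).mono fun N hN => ?_)
  rw [Real.norm_of_nonneg (qpar_pos hN).le, Real.norm_of_nonneg (by positivity)]
  exact qpar_le hN

lemma tendsto_qpar_sq : Tendsto (fun N => qpar N ^ 2) atTop (nhds 0) := by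
  simpa using (qpar_isBigO.trans_tendsto tendsto_inv_atTop_nhds_zero_nat).pow 2

lemma qpar_sq_isBigO_one : (fun N => qpar N ^ 2) =O[atTop] fun _ => (1 : ℝ) :=
  tendsto_qpar_sq.isBigO_one ℝ

lemma natCast_isRelApprox :
    IsRelApprox atTop (fun N => qpar N ^ 2) (fun N => (N : ℝ)) (fun N => (qpar N)⁻¹) := by
  refine (isBigO_refl qpar atTop).congr' ?_ ?_
  · filter_upwards [eventually_ge_atTop 2] with N hN
    rw [← inv_qpar_add_qpar hN, add_sub_cancel_left]
  · filter_upwards [eventually_qpar_ne_zero] with N hq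
    rw [sq, mul_inv_cancel_right₀ hq]

end QuantumParameter

section QuantumIntegers

lemma qint_succ {N : ℕ} (hq : qpar N ≠ 0) (n : ℕ) :
    qint N (n + 1) = (qpar N)⁻¹ ^ n * ∑ i ∈ Finset.range (n + 1), (qpar N ^ 2) ^ i := by
  rw [qint, ← Finset.sum_flip, Finset.mul_sum]
  refine Finset.sum_congr rfl fun i hi => ?_
  have hexp : ((n + 1 : ℕ) : ℤ) - 1 - 2 * ((n - i : ℕ) : ℤ) = -n + (2 * i : ℕ) := by
    have := Finset.mem_range.1 hi
    omega
  rw [hexp, zpow_add₀ hq, zpow_neg, zpow_natCast, zpow_natCast, inv_pow, pow_mul]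

lemma qint_succ_isRelApprox (n : ℕ) :
    IsRelApprox atTop (fun N => qpar N ^ 2) (fun N => qint N (n + 1))
      (fun N => (qpar N)⁻¹ ^ n) := by
  have hgeom := IsRelApprox.refl.mul (g := fun N => (qpar N)⁻¹ ^ n)
    (isRelApprox_geom_sum qpar_sq_isBigO_one n) qpar_sq_isBigO_one
  refine hgeom.congr' ?_ (.of_forall fun N => by simp)
  filter_upwards [eventually_qpar_ne_zero] with N hq
  rw [qint_succ hq, mul_one]

lemma qfact_isRelApprox (n : ℕ) :
    IsRelApprox atTop (fun N => qpar N ^ 2) (fun N => qfact N n)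
      (fun N => (qpar N)⁻¹ ^ n.choose 2) := by
  have hprod (N : ℕ) : ∏ i ∈ Finset.range n, (qpar N)⁻¹ ^ i = (qpar N)⁻¹ ^ n.choose 2 := by
    rw [Finset.prod_pow_eq_pow_sum, Finset.sum_range_id, Nat.choose_two_right]
  simpa only [qfact, hprod] using IsRelApprox.finsetProd (s := Finset.range n)
    (fun i _ => qint_succ_isRelApprox i) qpar_sq_isBigO_one

end QuantumIntegers

section ThetaNet

lemma choose_two_sum_of_admissible {k l m r : ℕ} (hadm : l + m = k + 2 * r) (hrl : r ≤ l)
    (hrm : r ≤ m) :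
    r.choose 2 + (l - r).choose 2 + (m - r).choose 2 + (k + r + 1).choose 2 =
      l.choose 2 + m.choose 2 + k.choose 2 + (k + r) := by
  obtain ⟨a, rfl⟩ := Nat.exists_eq_add_of_le hrl
  obtain ⟨b, rfl⟩ := Nat.exists_eq_add_of_le hrm
  obtain rfl : k = a + b := by omega
  simp only [Nat.add_sub_cancel_left]
  qify
  simp only [Nat.cast_choose_two]
  push_cast
  ring

lemma thetaNet_numerator_isRelApprox (k l m r : ℕ) :
    IsRelApprox atTop (fun N => qpar N ^ 2)
      (fun N => qfact N r * qfact N (l - r) * qfact N (m - r) * qfact N (k + r + 1))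
      (fun N => (qpar N)⁻¹ ^
        (r.choose 2 + (l - r).choose 2 + (m - r).choose 2 + (k + r + 1).choose 2)) := by
  have hε := qpar_sq_isBigO_one
  simpa only [pow_add] using (((qfact_isRelApprox r).mul (qfact_isRelApprox (l - r)) hε).mul
    (qfact_isRelApprox (m - r)) hε).mul (qfact_isRelApprox (k + r + 1)) hε

lemma thetaNet_denominator_isRelApprox (k l m r : ℕ) :
    IsRelApprox atTop (fun N => qpar N ^ 2)
      (fun N => qfact N l * qfact N m * qfact N k * (qint N (k + 1) * (N : ℝ) ^ r))
      (fun N => (qpar N)⁻¹ ^ (l.choose 2 + m.choose 2 + k.choose 2 + (k + r))) := by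
  have hε := qpar_sq_isBigO_one
  simpa only [pow_add] using (((qfact_isRelApprox l).mul (qfact_isRelApprox m) hε).mul
    (qfact_isRelApprox k) hε).mul
      ((qint_succ_isRelApprox k).mul (natCast_isRelApprox.pow hε r) hε) hε

lemma one_sub_thetaNet_div_isBigO_qpar_sq {k l m r : ℕ} (hadm : l + m = k + 2 * r) (hrl : r ≤ l)
    (hrm : r ≤ m) :
    (fun N : ℕ => 1 - thetaNet N k l m r / (qint N (k + 1) * (N : ℝ) ^ r)) =O[atTop]
      fun N => qpar N ^ 2 := by
  have hnum := thetaNet_numerator_isRelApprox k l m r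
  rw [choose_two_sum_of_admissible hadm hrl hrm] at hnum
  simpa only [thetaNet, div_div] using hnum.one_sub_div (thetaNet_denominator_isRelApprox k l m r)
    tendsto_qpar_sq (eventually_qpar_ne_zero.mono fun _ hq => pow_ne_zero _ (inv_ne_zero hq))

end ThetaNet

/-- For an admissible triple `(l,m,k)` with `r = (l+m−k)/2`, as `N → ∞` one has
`1 − θ_q(k,l,m)/([k+1]_q·N^r) = O(N^{−2})`, and consequently
`√(1 − θ_q(k,l,m)/([k+1]_q·N^r)) = O(N^{−1})`. -/
theorem thetaNet_ratio_asymptotics (k l m r : ℕ)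
    (hadm : l + m = k + 2 * r) (hrl : r ≤ l) (hrm : r ≤ m) :
    ((fun N : ℕ => 1 - thetaNet N k l m r / (qint N (k + 1) * (N : ℝ) ^ r)) =O[atTop]
      fun N : ℕ => (N : ℝ) ^ (-2 : ℤ)) ∧
    ((fun N : ℕ =>
        Real.sqrt (1 - thetaNet N k l m r / (qint N (k + 1) * (N : ℝ) ^ r))) =O[atTop]
      fun N : ℕ => (N : ℝ)⁻¹) := by
  have hmain : (fun N : ℕ => 1 - thetaNet N k l m r / (qint N (k + 1) * (N : ℝ) ^ r)) =O[atTop]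
      fun N : ℕ => (N : ℝ)⁻¹ ^ 2 :=
    (one_sub_thetaNet_div_isBigO_qpar_sq hadm hrl hrm).trans (qpar_isBigO.pow 2)
  constructor
  · simpa only [zpow_neg, zpow_ofNat, inv_pow] using hmain
  · exact (hmain.sqrt (.of_forall fun N => by positivity)).congr_right fun N =>
      Real.sqrt_sq (by positivity)
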